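/- For ℓ ≥ 1 and k ≥ 3, (f_{ℓ−1}^{(k−1)} − 1)/2 ≤ r_ℓ^{(k)} ≤ (f_{ℓ−1}^{(k−1)} + 1)/2; equivalently |2·r_ℓ^{(k)} − f_{ℓ−1}^{(k−1)}| ≤ 1, where r_ℓ^{(k)} counts binary strings of length ℓ starting with 0, ending with 1, avoiding 0^k and 1^k as factors, and f^{(k−1)} is the (k−1)-generalized Fibonacci sequence. -/

import Mathlib

open List

/-- `w` avoids `p` as a consecutive factor. -/
def Avoids (p w : List Bool) : Prop := ¬ p <:+: w

/-- The set `V^{i,(k)}` of binary strings `1^k 0 u 1 0^k` of length `i`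
where `0u1` avoids `0^k` and `1^k` as factors (`true` plays the role of `1`). -/
def Vik (k i : ℕ) : Set (List Bool) :=
  {w | ∃ u : List Bool,
      w = List.replicate k true ++ ([false] ++ u ++ [true]) ++ List.replicate k false ∧
      w.length = i ∧
      Avoids (List.replicate k false) ([false] ++ u ++ [true]) ∧
      Avoids (List.replicate k true) ([false] ++ u ++ [true])}

/-- `u` and `v` are non-overlapping (in the direction prefix-of-`u` /
suffix-of-`v`): no proper nonempty prefix of `u` equals a proper nonempty
suffix of `v`. -/
def CrossBF (u v : List Bool) : Prop :=
  ∀ p : List Bool, p ≠ [] → p ≠ u → p ≠ v → ¬(p <+: u ∧ p <:+ v)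

/-- `R_ℓ(0^k,1^k)`: binary strings of length `ℓ` starting with `0`, ending with
`1`, avoiding `0^k` and `1^k` as factors. -/
def Rset (k ℓ : ℕ) : Set (List Bool) :=
  {w | w.length = ℓ ∧ w.head? = some false ∧ w.getLast? = some true ∧
       Avoids (List.replicate k false) w ∧ Avoids (List.replicate k true) w}

/-- words that may follow a run of `b` with `j` more copies of `b` allowed, ending in `true` -/
def LW (m : ℕ) : ℕ → Bool → ℕ → Finset (List Bool)
  | 0, b, _ => if b then {[]} else ∅
  | n+1, b, 0 => (LW m n (!b) (m-1)).image (List.cons (!b))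
  | n+1, b, j+1 => (LW m n b j).image (List.cons b) ∪
      (LW m n (!b) (m-1)).image (List.cons (!b))

def CW (m : ℕ) : ℕ → Bool → ℕ → ℤ
  | 0, b, _ => if b then 1 else 0
  | n+1, b, 0 => CW m n (!b) (m-1)
  | n+1, b, j+1 => CW m n b j + CW m n (!b) (m-1)

lemma card_LW (m n : ℕ) (b : Bool) (j : ℕ) : ((LW m n b j).card : ℤ) = CW m n b j := by
  induction n generalizing b j with
  | zero => cases b <;> simp [LW, CW]
  | succ n ih =>
    have inj : ∀ c : Bool, Function.Injective (List.cons c) := fun c => List.cons_injective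
    cases j with
    | zero => rw [LW, CW, Finset.card_image_of_injective _ (inj _), ih]
    | succ j =>
      rw [LW, CW, Finset.card_union_of_disjoint, Finset.card_image_of_injective _ (inj _),
        Finset.card_image_of_injective _ (inj _)]
      · push_cast
        rw [ih, ih]
      · rw [Finset.disjoint_left]
        intro w hw hw'
        simp only [Finset.mem_image] at hw hw'
        obtain ⟨x, _, rfl⟩ := hw
        obtain ⟨y, _, h⟩ := hw'
        simp at h

lemma infix_switch (k a : ℕ) (c b : Bool) (w : List Bool) (ha : a < k) :
    List.replicate k c <:+: List.replicate a b ++ (!b) :: w ↔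
      List.replicate k c <:+: (!b) :: w := by
  induction a with
  | zero => simp
  | succ a ih =>
    rw [List.replicate_succ, List.cons_append, List.infix_cons_iff, ih (by omega)]
    constructor
    · rintro (h | h)
      · exfalso
        rw [← List.cons_append, ← List.replicate_succ] at h
        have h0 := h.getElem (i := 0) (by simp; omega)
        have h1 := h.getElem (i := a+1) (by simpa using ha)
        simp at h0 h1
        rw [h0] at h1
        cases b <;> simp at h1
      · exact h
    · exact Or.inr

lemma mem_LW (m n : ℕ) (b : Bool) (j : ℕ) (hj : j + 1 ≤ m) (w : List Bool) :
    w ∈ LW m n b j ↔ w.length = n ∧ (b :: w).getLast? = some true ∧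
      ∀ c, ¬ List.replicate (m+1) c <:+: List.replicate (m-j) b ++ w := by
  induction n generalizing b j w with
  | zero =>
    have : ∀ c, ¬ List.replicate (m+1) c <:+: List.replicate (m-j) b := by
      intro c h
      have := h.length_le
      simp at this
      omega
    rw [LW]
    cases b <;> simp
    · rintro rfl
      simp
    · rintro rfl
      simpa using this
  | succ n ih =>
    cases w with
    | nil => cases j <;> simp [LW]
    | cons x w =>
      by_cases hx : x = !b
      · subst hx
        have e : ∀ c, List.replicate (m+1) c <:+: List.replicate (m-j) b ++ (!b) :: w ↔
            List.replicate (m+1) c <:+: List.replicate (m-(m-1)) (!b) ++ w := by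
          intro c
          rw [infix_switch _ _ _ _ _ (by omega)]
          rw [show m - (m-1) = 1 by omega]
          simp
        have hm : (!b) :: w ∈ LW m (n+1) b j ↔ w ∈ LW m n (!b) (m-1) := by
          cases j <;> simp [LW]
        rw [hm, ih _ _ (by omega)]
        simp only [e]
        simp
      · have hx : x = b := by cases x <;> cases b <;> simp_all
        subst hx
        cases j with
        | zero =>
          have hm : x :: w ∉ LW m (n+1) x 0 := by simp [LW]
          refine iff_of_false hm ?_
          rintro ⟨_, _, h⟩
          refine h x ⟨[], w, ?_⟩
          rw [List.replicate_succ']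
          simp
        | succ j =>
          have hm : x :: w ∈ LW m (n+1) x (j+1) ↔ w ∈ LW m n x j := by
            simp [LW]
          rw [hm, ih _ _ (by omega)]
          have : List.replicate (m - j) x ++ w = List.replicate (m-(j+1)) x ++ x :: w := by
            rw [show m - j = (m-(j+1)) + 1 by omega, List.replicate_succ']
            simp
          rw [this]
          simp

lemma CW_diff (m n : ℕ) (j : ℕ) (hj : j + 1 ≤ m) :
    CW m n false j - CW m n true j =
      (if n % (m+1) = j + 1 then 1 else 0) - (if n % (m+1) = 0 then 1 else 0) := by
  induction n generalizing j with
  | zero => simp [CW]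
  | succ n ih =>
    have hb := ih (m-1) (by omega)
    have hmod : (n+1) % (m+1) = if n % (m+1) = m then 0 else n % (m+1) + 1 := by
      have h1 := Nat.mod_lt n (show 0 < m+1 by omega)
      rw [Nat.add_mod, Nat.mod_eq_of_lt (show 1 < m+1 by omega)]
      split_ifs with h
      · rw [h, Nat.mod_self]
      · exact Nat.mod_eq_of_lt (by omega)
    have h1 := Nat.mod_lt n (show 0 < m+1 by omega)
    rw [hmod]
    generalize n % (m+1) = q at *
    cases j with
    | zero =>
      simp only [CW, Bool.not_false, Bool.not_true]
      split_ifs at * <;> omega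
    | succ j =>
      have ha := ih j (by omega)
      simp only [CW, Bool.not_false, Bool.not_true]
      split_ifs at * <;> omega

def SW (m n j : ℕ) : ℤ := CW m n false j + CW m n true j

lemma SW_zero (m j : ℕ) : SW m 0 j = 1 := by simp [SW, CW]
lemma SW_succ_zero (m n : ℕ) : SW m (n+1) 0 = SW m n (m-1) := by
  simp [SW, CW, add_comm]
lemma SW_succ_succ (m n j : ℕ) : SW m (n+1) (j+1) = SW m n j + SW m n (m-1) := by
  simp [SW, CW]; ring

lemma SW_small (m n j : ℕ) (h : n ≤ j) (hj : j + 1 ≤ m) : SW m n j = 2 ^ n := by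
  induction n generalizing j with
  | zero => simp [SW_zero]
  | succ n ih =>
    obtain ⟨j, rfl⟩ : ∃ i, j = i + 1 := ⟨j - 1, by omega⟩
    rw [SW_succ_succ, ih j (by omega) (by omega), ih (m-1) (by omega) (by omega)]
    ring

lemma SW_big (m n j : ℕ) (h : j < n) :
    SW m n j = ∑ i ∈ Finset.range (j+1), SW m (n - 1 - i) (m-1) := by
  induction j generalizing n with
  | zero =>
    obtain ⟨n, rfl⟩ : ∃ i, n = i + 1 := ⟨n - 1, by omega⟩
    simp [SW_succ_zero]
  | succ j ih =>
    obtain ⟨n, rfl⟩ : ∃ i, n = i + 1 := ⟨n - 1, by omega⟩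
    rw [SW_succ_succ, ih n (by omega), Finset.sum_range_succ' _ (j+1)]
    congr 1
    apply Finset.sum_congr rfl
    intro i _
    congr 1
    omega

/-- `(f_{ℓ-1}^{(k-1)} - 1)/2 ≤ r_ℓ^{(k)} ≤ (f_{ℓ-1}^{(k-1)} + 1)/2`, i.e.
`|2 r_ℓ^{(k)} - f_{ℓ-1}^{(k-1)}| ≤ 1`. -/
theorem stmt_12 (k ℓ : ℕ) (hk : 3 ≤ k) (hℓ : 1 ≤ ℓ)
    (f : ℕ → ℕ)
    (hf1 : ∀ j : ℕ, j < k - 1 → f j = 2 ^ j)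
    (hf2 : ∀ j : ℕ, k - 1 ≤ j → f j = ∑ i ∈ Finset.range (k - 1), f (j - 1 - i)) :
    |2 * ((Rset k ℓ).ncard : ℤ) - (f (ℓ - 1) : ℤ)| ≤ 1 := by
  obtain ⟨m, rfl⟩ : ∃ m, k = m + 1 := ⟨k - 1, by omega⟩
  obtain ⟨n, rfl⟩ : ∃ n, ℓ = n + 1 := ⟨ℓ - 1, by omega⟩
  simp only [Nat.add_sub_cancel] at *
  have hf : ∀ j, (f j : ℤ) = SW m j (m-1) := by
    intro j
    induction j using Nat.strong_induction_on with
    | _ j ih =>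
      rcases lt_or_ge j m with h | h
      · rw [hf1 j h, SW_small _ _ _ (by omega) (by omega)]
        simp
      · rw [hf2 j h, SW_big _ _ _ (by omega), show m - 1 + 1 = m by omega]
        push_cast
        apply Finset.sum_congr rfl
        intro i _
        exact ih _ (by omega)
  have hR : Rset (m+1) (n+1) = ((LW m n false (m-1)).image (List.cons false) : Finset _) := by
    ext w
    simp only [Rset, Avoids, Set.mem_setOf_eq, Finset.coe_image, Set.mem_image, Finset.mem_coe]
    cases w with
    | nil => simp
    | cons x w =>
      have hm := mem_LW m n false (m-1) (by omega) w
      rw [show m - (m-1) = 1 by omega] at hm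
      simp only [Bool.forall_bool, List.replicate_one, List.singleton_append] at hm
      cases x
      · simp only [List.cons.injEq, true_and, exists_eq_right, hm]
        simp
      · simp
  have hc : ((Rset (m+1) (n+1)).ncard : ℤ) = CW m n false (m-1) := by
    rw [hR, Set.ncard_coe_finset, Finset.card_image_of_injective _ List.cons_injective, card_LW]
  rw [hc, hf, SW]
  have hd := CW_diff m n (m-1) (by omega)
  rw [abs_le]
  split_ifs at hd <;> constructor <;> omega
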